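/- arXiv:2201.05693 — 3 statements merged into one kernel-verified Lean document; each statement's English description precedes it below -/
import Mathlib

section
/- For every z, 2^{k0−1}·Q_{k0}(z) = T_{k0}(z−1), where T_{k0} is the Chebyshev polynomial of the first kind of degree k0; equivalently, the spectral decimation function of the (k0+1)×(k0+1) standard probabilistic path Laplacian is R(z) = 1 − (−1)^{k0}·T_{k0}(z−1). -/
open Polynomial

/-!
With `x = z - 1`, the sequence `Q₀, Q₁, 2 Q₂, 4 Q₃, …` satisfies the Chebyshev recurrence
`t (k + 2) = 2 x t (k + 1) - t k` from the very first step: doubling the factor at each index turns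
the coefficient `1 / 4` into `1`, and since `Q₀` and `Q₁` carry the same factor, the coefficient
needed in `Q₂` is exactly the exceptional `1 / 2`. The initial values `1` and `x` are those of `T`.
-/

section CommRing

variable {A : Type*} [CommRing A] {x : A} {N : ℕ}

theorem eq_eval_T_of_recurrence {t : ℕ → A} (h_zero : t 0 = 1) (h_one : t 1 = x)
    (h_add_two : ∀ n, n + 2 ≤ N → t (n + 2) = 2 * x * t (n + 1) - t n) {n : ℕ} (hn : n ≤ N) :
    t n = (Chebyshev.T A n).eval x := by
  induction n using Nat.twoStepInduction with
  | zero => simp [h_zero]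
  | one => simp [h_one]
  | more n ih ih' =>
    rw [h_add_two n hn, ih (by lia), ih' (by lia)]
    simp [Chebyshev.T_add_two]

theorem two_pow_mul_eq_eval_T_of_recurrence {q : ℕ → A} (h_zero : q 0 = 1) (h_one : q 1 = x)
    (h_two : 2 * q 2 = 2 * x * q 1 - q 0)
    (h_add_three : ∀ n, n + 3 ≤ N → 4 * q (n + 3) = 4 * x * q (n + 2) - q (n + 1))
    {n : ℕ} (hn : n + 1 ≤ N) :
    2 ^ n * q (n + 1) = (Chebyshev.T A (n + 1 : ℕ)).eval x := by
  -- Truncated subtraction gives `q 0` the factor `2 ^ (0 - 1) = 1`, as the recurrence needs.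
  refine eq_eval_T_of_recurrence (t := fun k ↦ 2 ^ (k - 1) * q k)
    (by simpa using h_zero) (by simpa using h_one) (fun k hk ↦ ?_) hn
  cases k with
  | zero => simpa using h_two
  | succ k =>
    simp only [Nat.add_sub_cancel, Nat.reduceSubDiff]
    linear_combination 2 ^ k * h_add_three k hk

end CommRing

section Field

variable {K : Type*} [Field K]

theorem div_neg_one_pow_mul_inv (a c : K) (n : ℕ) :
    a / ((-1) ^ n * c⁻¹) = (-1) ^ n * (c * a) := by
  rw [div_eq_mul_inv, mul_inv, inv_inv, ← inv_pow, inv_neg_one]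
  ring

variable [NeZero (2 : K)]

theorem two_pow_mul_eq_T_comp_X_sub_one {N : ℕ} {Q : ℕ → K[X]}
    (h_zero : Q 0 = 1) (h_one : Q 1 = X - 1) (h_two : Q 2 = (X - 1) * Q 1 - C (1 / 2) * Q 0)
    (h_add_three : ∀ n, n + 3 ≤ N → Q (n + 3) = (X - 1) * Q (n + 2) - C (1 / 4) * Q (n + 1))
    {n : ℕ} (hn : n + 1 ≤ N) :
    2 ^ n * Q (n + 1) = (Chebyshev.T K (n + 1 : ℕ)).comp (X - 1) := by
  have two_mul_half : (2 : K[X]) * C (1 / 2) = 1 := by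
    rw [← C_ofNat, ← C_mul, mul_one_div_cancel two_ne_zero, C_1]
  have four_mul_quarter : (4 : K[X]) * C (1 / 4) = 1 := by
    have four_ne_zero : (4 : K) ≠ 0 := by
      rw [show (4 : K) = 2 * 2 by norm_num]
      exact mul_ne_zero two_ne_zero two_ne_zero
    rw [← C_ofNat, ← C_mul, mul_one_div_cancel four_ne_zero, C_1]
  rw [comp_eq_aeval, Chebyshev.aeval_T]
  refine two_pow_mul_eq_eval_T_of_recurrence h_zero h_one ?_ (fun k hk ↦ ?_) hn
  · linear_combination 2 * h_two - Q 0 * two_mul_half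
  · linear_combination 4 * h_add_three k hk - Q (k + 1) * four_mul_quarter

theorem statement_15_general (k0 : ℕ) (hk0 : 1 ≤ k0) (Q : ℕ → K[X])
    (hQ0 : Q 0 = 1) (hQ1 : Q 1 = X - 1) (hQ2 : Q 2 = (X - 1) * Q 1 - C (1 / 2) * Q 0)
    (hQ : ∀ k, 3 ≤ k → k ≤ k0 → Q k = (X - 1) * Q (k - 1) - C (1 / 4) * Q (k - 2)) :
    (∀ z : K, 2 ^ (k0 - 1) * (Q k0).eval z = (Chebyshev.T K k0).eval (z - 1)) ∧
    (∀ z : K, 1 - (Q k0).eval z / ((-1) ^ k0 * (2 ^ (k0 - 1))⁻¹) =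
      1 - (-1) ^ k0 * (Chebyshev.T K k0).eval (z - 1)) := by
  obtain ⟨n, rfl⟩ := Nat.exists_eq_add_of_le' hk0
  have eval_Q (z : K) :
      2 ^ n * (Q (n + 1)).eval z = (Chebyshev.T K (n + 1 : ℕ)).eval (z - 1) := by
    have polynomial_identity := two_pow_mul_eq_T_comp_X_sub_one hQ0 hQ1 hQ2
      (fun k hk ↦ hQ (k + 3) (by lia) hk) le_rfl
    simpa [eval_comp] using congrArg (eval z) polynomial_identity
  exact ⟨eval_Q, fun z ↦ by rw [div_neg_one_pow_mul_inv, Nat.add_sub_cancel, eval_Q]⟩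

end Field

/-- For the polynomial `Q_{k0}` associated with the standard
probabilistic path Laplacian, `2^{k0−1} · Q_{k0}(z) = T_{k0}(z − 1)` where `T_{k0}` is
the Chebyshev polynomial of the first kind of degree `k0`; equivalently, the spectral
decimation function `R(z) = 1 − Q_{k0}(z) / ((−1)^{k0}·2^{−(k0−1)})` equals
`1 − (−1)^{k0}·T_{k0}(z − 1)`. -/
theorem statement_15 (k0 : ℕ) (hk0 : 2 ≤ k0)
    (Q : ℕ → Polynomial ℝ)
    (hQ0 : Q 0 = 1) (hQ1 : Q 1 = X - 1)
    (hQ2 : Q 2 = (X - 1) * Q 1 - C (1 / 2) * Q 0)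
    (hQ : ∀ k, 3 ≤ k → k ≤ k0 → Q k = (X - 1) * Q (k - 1) - C (1 / 4) * Q (k - 2)) :
    (∀ z : ℝ, 2 ^ (k0 - 1) * (Q k0).eval z =
      (Polynomial.Chebyshev.T ℝ (k0 : ℤ)).eval (z - 1)) ∧
    (∀ z : ℝ, 1 - (Q k0).eval z / ((-1 : ℝ) ^ k0 * ((2 : ℝ) ^ (k0 - 1))⁻¹) =
      1 - (-1 : ℝ) ^ k0 * (Polynomial.Chebyshev.T ℝ (k0 : ℤ)).eval (z - 1)) :=
  statement_15_general k0 (one_le_two.trans hk0) Q hQ0 hQ1 hQ2 hQ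
end

section
/- The spectrum over ℂ of Δ equals {0, 1−√(1−p), 1, 1+√(1−p), 2}, and the spectrum over ℂ of Δ^D equals {1−√p, 1, 1+√p}, where √ denotes the real square root. -/
/-!
The vectors fixed by the reflection `i ↦ 4 - i` of the path form a three-dimensional
`Δ`-invariant subspace. On it, on the two-dimensional quotient by it, and on the Dirichlet part, the
Laplacian is a tridiagonal matrix with constant diagonal `1`. The characteristic polynomial of such
a matrix is `(X - 1) ^ 2 - r`, times `X - 1` in dimension three, with `r = 1` on the fixed vectors,
`r = 1 - p` on the quotient and `r = p` for `Δ^D`.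
-/

open Matrix Polynomial

section CommRing

variable {R : Type*} [CommRing R]

-- The hypothesis says that the graph of `S` is invariant; the two factors are the characteristic
-- polynomials of the action on this graph and on the quotient by it.
theorem charpoly_fromBlocks_of_invariant_graph {m n : Type*} [Fintype m] [DecidableEq m]
    [Fintype n] [DecidableEq n] (A : Matrix m m R) (B : Matrix m n R) (C : Matrix n m R)
    (D : Matrix n n R) (S : Matrix n m R) (h : C + D * S = S * (A + B * S)) :
    (fromBlocks A B C D).charpoly = (A + B * S).charpoly * (D - S * B).charpoly := by
  let P : Matrix (m ⊕ n) (m ⊕ n) R := fromBlocks 1 0 S 1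
  let Q : Matrix (m ⊕ n) (m ⊕ n) R := fromBlocks 1 0 (-S) 1
  let T : Matrix (m ⊕ n) (m ⊕ n) R := fromBlocks (A + B * S) B 0 (D - S * B)
  have hPQ : P * Q = 1 := by simp [P, Q, fromBlocks_multiply]
  have hconj : fromBlocks A B C D * P = P * T := by simp [P, T, fromBlocks_multiply, h]
  calc (fromBlocks A B C D).charpoly
      = (P * T * Q).charpoly := by rw [← hconj, mul_assoc, hPQ, mul_one]
    _ = T.charpoly := by
      rw [charpoly_mul_comm, ← mul_assoc, mul_eq_one_comm.mp hPQ, one_mul]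
    _ = (A + B * S).charpoly * (D - S * B).charpoly := charpoly_fromBlocks_zero₂₁ ..

theorem charpoly_const_diag_fin_two (d a b : R) :
    (!![d, a; b, d]).charpoly = (X - C d) ^ 2 - C (a * b) := by
  have hchar : charmatrix !![d, a; b, d] = !![X - C d, -C a; -C b, X - C d] := by
    ext1 i j
    fin_cases i <;> fin_cases j <;> simp
  rw [charpoly, hchar, det_fin_two_of, map_mul]
  ring

theorem charpoly_tridiagonal_const_diag_fin_three (d a b c e : R) :
    (!![d, a, 0; b, d, c; 0, e, d]).charpoly =
      (X - C d) * ((X - C d) ^ 2 - C (a * b + c * e)) := by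
  have hchar : charmatrix !![d, a, 0; b, d, c; 0, e, d] =
      !![X - C d, -C a, 0; -C b, X - C d, -C c; 0, -C e, X - C d] := by
    ext1 i j
    fin_cases i <;> fin_cases j <;> simp
  simp only [charpoly, hchar, det_fin_three, of_apply, cons_val, map_add, map_mul]
  ring

theorem charpoly_centrosymmetric_tridiagonal_const_diag_fin_five (d a b c e : R) :
    (!![d, a, 0, 0, 0; b, d, c, 0, 0; 0, e, d, e, 0; 0, 0, c, d, b; 0, 0, 0, a, d]).charpoly =
      (X - C d) * ((X - C d) ^ 2 - C (a * b + 2 * c * e)) * ((X - C d) ^ 2 - C (a * b)) := by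
  let A : Matrix (Fin 3) (Fin 3) R := !![d, a, 0; b, d, c; 0, e, d]
  let B : Matrix (Fin 3) (Fin 2) R := !![0, 0; 0, 0; e, 0]
  let E : Matrix (Fin 2) (Fin 3) R := !![0, 0, c; 0, 0, 0]
  let D : Matrix (Fin 2) (Fin 2) R := !![d, b; a, d]
  -- The graph of `S` consists of the vectors fixed by the reflection.
  let S : Matrix (Fin 2) (Fin 3) R := !![0, 1, 0; 1, 0, 0]
  have hblocks : !![d, a, 0, 0, 0; b, d, c, 0, 0; 0, e, d, e, 0; 0, 0, c, d, b; 0, 0, 0, a, d] =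
      reindex finSumFinEquiv finSumFinEquiv (fromBlocks A B E D) := by
    ext i j
    fin_cases i <;> fin_cases j <;> rfl
  have hsymm : A + B * S = !![d, a, 0; b, d, c; 0, 2 * e, d] := by
    simp [A, B, S, two_mul]
  have hquot : D - S * B = !![d, b; a, d] := by
    simp [B, D, S]
  have hinv : E + D * S = S * (A + B * S) := by
    simp [hsymm, E, D, S]
  rw [hblocks, charpoly_reindex, charpoly_fromBlocks_of_invariant_graph A B E D S hinv, hsymm,
    hquot, charpoly_tridiagonal_const_diag_fin_three, charpoly_const_diag_fin_two, mul_left_comm c,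
    ← mul_assoc 2, mul_comm b]

end CommRing

section Spectrum

variable {K L : Type*} [CommRing K] [Field L] [Algebra K L]

theorem mem_spectrum_map_algebraMap_iff {n : Type*} [Fintype n] [DecidableEq n]
    (M : Matrix n n K) (z : L) :
    z ∈ spectrum L (M.map (algebraMap K L)) ↔ aeval z M.charpoly = 0 := by
  rw [mem_spectrum_iff_isRoot_charpoly, charpoly_map, IsRoot.def, eval_map_algebraMap]

theorem aeval_X_sub_C_sq_sub_C_sq_eq_zero_iff (d s : K) (z : L) :
    aeval z ((X - C d) ^ 2 - C (s ^ 2)) = 0 ↔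
      z = algebraMap K L (d - s) ∨ z = algebraMap K L (d + s) := by
  simp only [map_sub, map_add, map_pow, aeval_X, aeval_C, sub_eq_zero, sq_eq_sq_iff_eq_or_eq_neg]
  grind

theorem spectrum_tridiagonal_const_diag_fin_three {d a b c e s : K} (hs : s ^ 2 = a * b + c * e) :
    spectrum L ((!![d, a, 0; b, d, c; 0, e, d]).map (algebraMap K L)) =
      {algebraMap K L (d - s), algebraMap K L d, algebraMap K L (d + s)} := by
  ext z
  rw [mem_spectrum_map_algebraMap_iff, charpoly_tridiagonal_const_diag_fin_three, ← hs, map_mul,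
    mul_eq_zero, aeval_X_sub_C_sq_sub_C_sq_eq_zero_iff, map_sub, aeval_X, aeval_C, sub_eq_zero]
  exact or_left_comm

theorem spectrum_centrosymmetric_tridiagonal_const_diag_fin_five {d a b c e s t : K}
    (hs : s ^ 2 = a * b) (ht : t ^ 2 = a * b + 2 * c * e) :
    spectrum L ((!![d, a, 0, 0, 0; b, d, c, 0, 0; 0, e, d, e, 0; 0, 0, c, d, b;
        0, 0, 0, a, d]).map (algebraMap K L)) =
      {algebraMap K L (d - t), algebraMap K L (d - s), algebraMap K L d,
        algebraMap K L (d + s), algebraMap K L (d + t)} := by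
  ext z
  rw [mem_spectrum_map_algebraMap_iff, charpoly_centrosymmetric_tridiagonal_const_diag_fin_five,
    ← ht, ← hs, map_mul, map_mul, mul_eq_zero, mul_eq_zero, aeval_X_sub_C_sq_sub_C_sq_eq_zero_iff,
    aeval_X_sub_C_sq_sub_C_sq_eq_zero_iff, map_sub, aeval_X, aeval_C, sub_eq_zero]
  simp only [Set.mem_insert_iff, Set.mem_singleton_iff]
  tauto

end Spectrum

/-- For the 5×5 centrosymmetric probabilistic path Laplacian `Δ` with
transition probabilities `1, p, 1/2, 1−p, 0` and its Dirichlet restriction `Δ^D`, the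
spectrum of `Δ` over `ℂ` is `{0, 1−√(1−p), 1, 1+√(1−p), 2}` and the spectrum of `Δ^D`
over `ℂ` is `{1−√p, 1, 1+√p}`. -/
theorem statement_17 (p : ℝ) (hp0 : 0 < p) (hp1 : p < 1) :
    spectrum ℂ
        ((!![1, -1, 0, 0, 0;
             p - 1, 1, -p, 0, 0;
             0, -1/2, 1, -1/2, 0;
             0, 0, -p, 1, p - 1;
             0, 0, 0, -1, 1] : Matrix (Fin 5) (Fin 5) ℝ).map Complex.ofReal) =
      {(0 : ℂ), ((1 - Real.sqrt (1 - p) : ℝ) : ℂ), (1 : ℂ),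
        ((1 + Real.sqrt (1 - p) : ℝ) : ℂ), (2 : ℂ)} ∧
    spectrum ℂ
        ((!![1, -p, 0;
             -1/2, 1, -1/2;
             0, -p, 1] : Matrix (Fin 3) (Fin 3) ℝ).map Complex.ofReal) =
      {((1 - Real.sqrt p : ℝ) : ℂ), (1 : ℂ), ((1 + Real.sqrt p : ℝ) : ℂ)} := by
  constructor
  · have hs : √(1 - p) ^ 2 = -1 * (p - 1) := by
      rw [Real.sq_sqrt (sub_nonneg.mpr hp1.le)]
      ring
    have ht : (1 : ℝ) ^ 2 = -1 * (p - 1) + 2 * -p * (-1 / 2) := by ring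
    simpa only [sub_self, one_add_one_eq_two, Complex.coe_algebraMap, Complex.ofReal_zero,
      Complex.ofReal_one, Complex.ofReal_ofNat]
      using spectrum_centrosymmetric_tridiagonal_const_diag_fin_five (L := ℂ) (d := 1) hs ht
  · have hs : √p ^ 2 = -p * (-1 / 2) + -1 / 2 * -p := by
      rw [Real.sq_sqrt hp0.le]
      ring
    exact spectrum_tridiagonal_const_diag_fin_three (L := ℂ) (d := 1) hs
end

section
/- For the rational function R(z) = 2z(2−z)(z−1)²/(p(1−p)) on ℂ, the solution set of R(z) = 0 is exactly {0, 1, 2}, and the solution set of R(z) = 2 is exactly {1−√(1−p), 1−√p, 1+√p, 1+√(1−p)}, where √ denotes the real square root. -/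
/-! The zeros of `R` are read off its factors. For `R(z) = 2`, put `w = (z - 1)²`: then
`z(2 - z) = 1 - w`, so the equation becomes `w(1 - w) = p(1 - p)`, which by the symmetry
`w ↦ 1 - w` means `w = p` or `w = 1 - p`. Taking square roots of `w` gives the points `z`. -/

theorem mul_one_sub_eq_mul_one_sub_iff {A : Type*} [CommRing A] [NoZeroDivisors A] {x y : A} :
    x * (1 - x) = y * (1 - y) ↔ x = y ∨ x = 1 - y := by
  have factor : x * (1 - x) - y * (1 - y) = (x - y) * (1 - y - x) := by ring
  rw [← sub_eq_zero, factor, mul_eq_zero, sub_eq_zero, sub_eq_zero, eq_comm (a := 1 - y)]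

theorem sub_sq_eq_sq_iff {A : Type*} [CommRing A] [NoZeroDivisors A] {x c a : A} :
    (x - c) ^ 2 = a ^ 2 ↔ x = c - a ∨ x = c + a := by
  rw [sq_eq_sq_iff_eq_or_eq_neg, sub_eq_iff_eq_add', sub_eq_iff_eq_add', ← sub_eq_add_neg, or_comm]

section SpectralDecimation

variable {K : Type*} [Field K]

/-- The spectral decimation function `R(z) = 2z(2 - z)(z - 1)² / (p(1 - p))` of the path Laplacian
with transition probabilities `1, p, 1/2, 1 - p, 0`, over an arbitrary field. By the convention
`x / 0 = 0` it vanishes identically for `p = 0` and `p = 1`. -/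
def spectralDecimation (p z : K) : K :=
  2 * z * (2 - z) * (z - 1) ^ 2 / (p * (1 - p))

theorem spectralDecimation_eq_sub_one_sq (p z : K) :
    spectralDecimation p z = 2 * ((z - 1) ^ 2 * (1 - (z - 1) ^ 2)) / (p * (1 - p)) := by
  unfold spectralDecimation
  ring

variable [NeZero (2 : K)] {p z : K}

theorem spectralDecimation_eq_zero_iff (hp0 : p ≠ 0) (hp1 : p ≠ 1) :
    spectralDecimation p z = 0 ↔ z = 0 ∨ z = 1 ∨ z = 2 := by
  have two_ne : (2 : K) ≠ 0 := two_ne_zero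
  have denom_ne : p * (1 - p) ≠ 0 := mul_ne_zero hp0 (sub_ne_zero.2 hp1.symm)
  simp only [spectralDecimation, div_eq_zero_iff, denom_ne, mul_eq_zero, two_ne,
    pow_eq_zero_iff two_ne_zero, sub_eq_zero, or_false, false_or, or_assoc,
    eq_comm (a := 2) (b := z), or_comm (a := z = 2) (b := z = 1)]

theorem spectralDecimation_eq_two_iff (hp0 : p ≠ 0) (hp1 : p ≠ 1) :
    spectralDecimation p z = 2 ↔ (z - 1) ^ 2 = p ∨ (z - 1) ^ 2 = 1 - p := by
  have denom_ne : p * (1 - p) ≠ 0 := mul_ne_zero hp0 (sub_ne_zero.2 hp1.symm)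
  rw [spectralDecimation_eq_sub_one_sq, div_eq_iff denom_ne, mul_right_inj' two_ne_zero,
    mul_one_sub_eq_mul_one_sub_iff]

theorem statement_18_general {a b : K} (hp0 : p ≠ 0) (hp1 : p ≠ 1) (ha : a ^ 2 = p)
    (hb : b ^ 2 = 1 - p) :
    {z : K | spectralDecimation p z = 0} = {0, 1, 2} ∧
    {z : K | spectralDecimation p z = 2} = {1 - b, 1 - a, 1 + a, 1 + b} := by
  constructor
  · ext z
    exact spectralDecimation_eq_zero_iff hp0 hp1
  · ext z
    calc spectralDecimation p z = 2
      _ ↔ (z - 1) ^ 2 = a ^ 2 ∨ (z - 1) ^ 2 = b ^ 2 := by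
        rw [spectralDecimation_eq_two_iff hp0 hp1, ha, hb]
      _ ↔ (z = 1 - a ∨ z = 1 + a) ∨ (z = 1 - b ∨ z = 1 + b) := by
        rw [sub_sq_eq_sq_iff, sub_sq_eq_sq_iff]
      _ ↔ z ∈ ({1 - b, 1 - a, 1 + a, 1 + b} : Set K) := by
        simp only [Set.mem_insert_iff, Set.mem_singleton_iff]
        tauto

end SpectralDecimation

/-- For the rational function `R(z) = 2z(2−z)(z−1)²/(p(1−p))` on `ℂ`
(the spectral decimation function of the 5×5 centrosymmetric probabilistic path
Laplacian with transition probabilities `1, p, 1/2, 1−p, 0`), the solution set of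
`R(z) = 0` is exactly `{0, 1, 2}` and the solution set of `R(z) = 2` is exactly
`{1−√(1−p), 1−√p, 1+√p, 1+√(1−p)}`. -/
theorem statement_18 (p : ℝ) (hp0 : 0 < p) (hp1 : p < 1) :
    {z : ℂ | 2 * z * (2 - z) * (z - 1) ^ 2 / ((p : ℂ) * (1 - (p : ℂ))) = 0} =
      {(0 : ℂ), (1 : ℂ), (2 : ℂ)} ∧
    {z : ℂ | 2 * z * (2 - z) * (z - 1) ^ 2 / ((p : ℂ) * (1 - (p : ℂ))) = 2} =
      {((1 - Real.sqrt (1 - p) : ℝ) : ℂ), ((1 - Real.sqrt p : ℝ) : ℂ),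
        ((1 + Real.sqrt p : ℝ) : ℂ), ((1 + Real.sqrt (1 - p) : ℝ) : ℂ)} := by
  simpa only [spectralDecimation, Complex.ofReal_add, Complex.ofReal_sub, Complex.ofReal_one] using
    statement_18_general (mod_cast hp0.ne') (mod_cast hp1.ne) (mod_cast Real.sq_sqrt hp0.le)
      (mod_cast Real.sq_sqrt (sub_nonneg.2 hp1.le))
end
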